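/- Let E be a finite set of size m and let r : 2^E → ℤ≥0 satisfy r(S) ≤ min(r(E), |S|) for every S ⊆ E; write r = r(E). Writing the Tutte polynomial T_M(x,y) = ∑_{S ⊆ E} (x-1)^{r(E)-r(S)} (y-1)^{|S|-r(S)} as ∑_{i,j} t_{ij} x^i y^j, for every integer k ≥ 0 we have ∑_{i,j} t_{ij} (-1)^{r-k+j} binom(r-i, k-(i+j)) = δ_{k,m}, where δ_{k,m} equals 1 if k = m and 0 otherwise, and binom(r-i, k-(i+j)) is interpreted as 0 when k - (i+j) < 0 or k - (i+j) > r - i. -/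

import Mathlib

/-!
The polynomial `∑ t_{ij} z^{i+j} (z-1)^{r-i}` is `(z-1)^r T(z/(z-1), z)` with denominators cleared.
It is linear in `T`, and since `x - 1` becomes `1/(z-1)` and `y - 1` becomes `z - 1`, the summand
`(x-1)^{r-r(S)} (y-1)^{|S|-r(S)}` contributes `(z-1)^{r(S)} (z-1)^{|S|-r(S)} = (z-1)^{|S|}`
(`sum_x_part`, `sum_y_part`). Summing over all `S`, the binomial theorem gives
`((z-1)+1)^m = z^m`, and the theorem is the coefficient of `z^k` in this identity.
-/

open Polynomial Finset

lemma coeff_X_sub_one_pow (a i : ℕ) :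
    ((X - 1 : ℤ[X]) ^ a).coeff i = (-1) ^ (a - i) * (a.choose i : ℤ) := by
  have h := coeff_X_add_C_pow (-1 : ℤ) a i
  rwa [C_neg, C_1, ← sub_eq_add_neg] at h

lemma coeff_coeff_term (a b i j : ℕ) :
    (((C X - 1 : ℤ[X][X]) ^ a * (X - 1) ^ b).coeff j).coeff i
      = ((X - 1 : ℤ[X]) ^ a).coeff i * ((X - 1 : ℤ[X]) ^ b).coeff j := by
  have h1 : (C X - 1 : ℤ[X][X]) ^ a = C ((X - 1) ^ a) := by simp
  have h2 : (X - 1 : ℤ[X][X]) ^ b = ((X - 1 : ℤ[X]) ^ b).map C := by simp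
  rw [h1, h2, coeff_C_mul, coeff_map, coeff_mul_C]

/-- The image of `(x - 1)^a` under `x ↦ z/(z-1)`, multiplied by `(z-1)^R`. -/
lemma sum_x_part (R a : ℕ) (h : a ≤ R) :
    ∑ i ∈ range (R + 1), C (((X - 1 : ℤ[X]) ^ a).coeff i) * (X ^ i * (X - 1) ^ (R - i))
      = (X - 1 : ℤ[X]) ^ (R - a) := by
  have hs : ∑ i ∈ range (a + 1), C (((X - 1 : ℤ[X]) ^ a).coeff i) * (X ^ i * (X - 1) ^ (R - i))
      = ∑ i ∈ range (R + 1),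
        C (((X - 1 : ℤ[X]) ^ a).coeff i) * (X ^ i * (X - 1) ^ (R - i)) := by
    refine sum_subset (range_mono (by omega)) fun i _ hi => ?_
    have hi' : a < i := by simpa using hi
    simp [coeff_X_sub_one_pow, Nat.choose_eq_zero_of_lt hi']
  -- The binomial theorem for `(z - (z - 1))^a = 1`.
  have h1 := add_pow (X : ℤ[X]) (-(X - 1)) a
  have h2 : (X : ℤ[X]) + -(X - 1) = 1 := by ring
  rw [h2, one_pow] at h1
  have h4 := congrArg (fun p => (X - 1 : ℤ[X]) ^ (R - a) * p) h1
  simp only [mul_one, mul_sum] at h4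
  rw [← hs, h4]
  refine sum_congr rfl fun i hi => ?_
  have hi' : i ≤ a := by simpa [Nat.lt_succ_iff] using hi
  have h3 : R - i = (R - a) + (a - i) := by omega
  rw [coeff_X_sub_one_pow, h3, pow_add, neg_pow (X - 1 : ℤ[X])]
  simp only [map_mul, map_pow, map_neg, map_one, map_natCast]
  ring

lemma sum_y_part (m b : ℕ) (h : b ≤ m) :
    ∑ j ∈ range (m + 1), C (((X - 1 : ℤ[X]) ^ b).coeff j) * X ^ j = (X - 1 : ℤ[X]) ^ b := by
  refine (as_sum_range_C_mul_X_pow' _ (Nat.lt_succ_of_le ?_)).symm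
  have h1 : (X - 1 : ℤ[X]).natDegree ≤ 1 := by
    simpa using natDegree_X_sub_C_le (1 : ℤ)
  exact (natDegree_pow_le_of_le b h1).trans (by omega)

/-- The polynomial identity `∑ t_{ij} z^{i+j} (z-1)^{r-i} = z^m`. -/
lemma tutte_polynomial_identity {E : Type*} [Fintype E] [DecidableEq E]
    (r : Finset E → ℕ) (hr : ∀ S : Finset E, r S ≤ min (r Finset.univ) S.card)
    (T : ℤ[X][X])
    (hT : T = ∑ S : Finset E, (C X - 1) ^ (r univ - r S) * (X - 1) ^ (S.card - r S)) :
    ∑ i ∈ range (r univ + 1), ∑ j ∈ range (Fintype.card E + 1),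
      C ((T.coeff j).coeff i) * (X ^ (i + j) * (X - 1) ^ (r univ - i))
      = (X : ℤ[X]) ^ Fintype.card E := by
  have key : ∀ S : Finset E, ∑ i ∈ range (r univ + 1), ∑ j ∈ range (Fintype.card E + 1),
      C ((((C X - 1 : ℤ[X][X]) ^ (r univ - r S) * (X - 1) ^ (S.card - r S)).coeff j).coeff i)
        * (X ^ (i + j) * (X - 1) ^ (r univ - i)) = (X - 1 : ℤ[X]) ^ S.card := by
    intro S
    have h1 := (hr S).trans (min_le_left _ _)
    have h2 := (hr S).trans (min_le_right _ _)
    have h3 := S.card_le_univ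
    have h4 : S.card = (r univ - (r univ - r S)) + (S.card - r S) := by omega
    conv_rhs => rw [h4, pow_add, ← sum_x_part (r univ) (r univ - r S) (by omega),
      ← sum_y_part (Fintype.card E) (S.card - r S) (by omega), sum_mul_sum]
    refine sum_congr rfl fun i _ => sum_congr rfl fun j _ => ?_
    rw [coeff_coeff_term, C_mul, pow_add]
    ring
  simp only [hT, finsetSum_coeff, map_sum, sum_mul]
  rw [sum_congr rfl fun i _ => sum_comm, sum_comm, sum_congr rfl fun S _ => key S]
  have h := Fintype.sum_pow_mul_eq_add_pow E (X - 1 : ℤ[X]) 1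
  simpa using h

/-- Comparing coefficients of `z^k` in `∑_{i,j} t_{ij} z^{i+j} (z-1)^{r-i} = z^m` gives:
for every `k ≥ 0`, `∑_{i,j} t_{ij} (-1)^{r-k+j} C(r-i, k-(i+j)) = δ_{k,m}`.
The sign `(-1)^{r-k+j}` is written as `(-1)^(r+j+k)`, which has the same parity, and
the binomial coefficient is interpreted as `0` when `k - (i+j) < 0` (via the `if`).
Since `t i j = 0` whenever `i > r = r(E)` or `j > m = |E|`, the sum over all `i, j`
equals the sum over `0 ≤ i ≤ r` and `0 ≤ j ≤ m`.
The Tutte polynomial is an element of `ℤ[x][y]`, where `x` is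
`Polynomial.C Polynomial.X` and `y` is `Polynomial.X`, so the coefficient
`t i j` of `x^i y^j` is `(T.coeff j).coeff i`. -/
theorem tutte_coeff_identity {E : Type*} [Fintype E] [DecidableEq E]
    (r : Finset E → ℕ)
    (hr : ∀ S : Finset E, r S ≤ min (r Finset.univ) S.card)
    (T : Polynomial (Polynomial ℤ))
    (hT : T = ∑ S : Finset E,
      (Polynomial.C Polynomial.X - 1) ^ (r Finset.univ - r S) *
        (Polynomial.X - 1) ^ (S.card - r S))
    (t : ℕ → ℕ → ℤ)
    (ht : ∀ i j, t i j = (T.coeff j).coeff i)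
    (k : ℕ) :
    ∑ i ∈ Finset.range (r Finset.univ + 1), ∑ j ∈ Finset.range (Fintype.card E + 1),
      t i j * (-1 : ℤ) ^ (r Finset.univ + j + k) *
        (if i + j ≤ k then ((r Finset.univ - i).choose (k - (i + j)) : ℤ) else 0) =
      (if k = Fintype.card E then 1 else 0) := by
  have h := congrArg (fun p => coeff p k) (tutte_polynomial_identity r hr T hT)
  simp only [finsetSum_coeff, coeff_X_pow] at h
  rw [← h]
  refine sum_congr rfl fun i hi => sum_congr rfl fun j _ => ?_
  have hi' : i ≤ r univ := by simpa [Nat.lt_succ_iff] using hi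
  rw [ht, coeff_C_mul, coeff_X_pow_mul', coeff_X_sub_one_pow, mul_assoc]
  congr 1
  split_ifs with hk
  · by_cases hc : k - (i + j) ≤ r univ - i
    -- In the first case the two exponents of `-1` differ by the even number `2 * k`.
    · have h5 : r univ + j + k = (r univ - i - (k - (i + j))) + 2 * k := by omega
      rw [h5, pow_add, pow_mul]
      simp
    · simp [Nat.choose_eq_zero_of_lt (not_le.mp hc)]
  · simp
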